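/- The set of elements V of the lattice MON of monoid varieties with V ≤ D is exactly the four-element chain ⊥ < SL < C₂ < D, where SL = ⟪{(x²,x),(xy,yx)}⟫, C₂ = ⟪{(x²,x³),(xy,yx)}⟫, and D = ⟪{(x²,x³),(x²y,xyx),(xyx,yx²)}⟫. -/

import Mathlib

/-!
Write `M = F/c` for a fully invariant congruence `c`. Then `c u v` holds iff the identity `u ≈ v`
holds in the monoid `M` (`rel_iff_sat`), so everything reduces to identities in monoids.

Completeness: if `M` satisfies the identities of `D`, a square `a²` is central and absorbs every
other occurrence of `a`. Hence a word `w` in which `a` occurs at least twice has the same value as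
`a² w'`, where `w'` is `w` with `a` deleted (`prod_extract`). Removing the multiple letters in this
way from two words with the same letters and the same simple letters reduces an identity to one
between words without repetitions (`prod_eq_of_cut`). So an identity follows from those of

* `SL`, if both sides have the same letters;
* `C₂`, if moreover both sides have the same simple letters;
* `D`, if moreover the simple letters occur in the same order.

Classification: let `c` contain the identities of `D`. If some pair in `c` has different letters on
the two sides, deleting all letters but one gives `xⁿ ≈ 1`, which together with `x² ≈ x³` yields
`x ≈ 1`, and `c` is trivial. Otherwise, if some pair has different simple letters, one gets `x ≈ x²`,
which forces commutativity, and `c` is the congruence of `SL`. Otherwise, if some pair has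
its simple letters in different orders, two of them are swapped, which gives `xy ≈ yx`, and `c`
belongs to `C₂`. In the remaining case `c` belongs to `D`.

Strictness is witnessed by the multiplicative monoid of `ZMod 2`, the monoid `{0, 1, 2} ⊆ ZMod 4`,
and the five-element monoid of factors of the word `ab` with a zero adjoined.
-/

/-- The free monoid over a countably infinite alphabet. -/
abbrev F : Type := FreeMonoid ℕ

/-- A congruence on the free monoid is fully invariant if it is stable
under every monoid endomorphism. -/
def IsFullyInvariant (c : Con F) : Prop :=
  ∀ f : F →* F, ∀ u v : F, c u v → c (f u) (f v)

/-- The type of fully invariant congruences on `F`. -/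
abbrev FICon : Type := {c : Con F // IsFullyInvariant c}

/-- The smallest fully invariant congruence containing a set of pairs of words. -/
def fiGen (S : Set (F × F)) : Con F :=
  sInf {c : Con F | IsFullyInvariant c ∧ ∀ p ∈ S, c p.1 p.2}

lemma fiGen_apply (S : Set (F × F)) (u v : F) :
    fiGen S u v ↔ ∀ c : Con F, (IsFullyInvariant c ∧ ∀ p ∈ S, c p.1 p.2) → c u v :=
  ⟨fun h c hc => h c hc, fun h c hc => h c hc⟩

lemma isFullyInvariant_fiGen (S : Set (F × F)) : IsFullyInvariant (fiGen S) := by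
  intro f u v h
  rw [fiGen_apply] at h ⊢
  exact fun c hc => hc.1 f u v (h c hc)

/-- The fully invariant closure of a congruence, as an element of `FICon`. -/
def fiCl (c : Con F) : FICon :=
  ⟨fiGen {p | c p.1 p.2}, isFullyInvariant_fiGen _⟩

lemma le_fiCl (c : Con F) : c ≤ (fiCl c).val := by
  refine le_sInf fun b hb => ?_
  rw [Con.le_def]
  exact fun {u v} huv => hb.2 (u, v) huv

lemma fiGC : GaloisConnection fiCl (Subtype.val : FICon → Con F) := by
  intro c d
  constructor
  · exact fun h => le_trans (le_fiCl c) h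
  · intro h
    have hle : (fiCl c).val ≤ d.val :=
      sInf_le ⟨d.2, fun p hp => (Con.le_def.mp h) hp⟩
    exact hle

/-- The Galois insertion between congruences and fully invariant congruences. -/
def fiGI : GaloisInsertion fiCl (Subtype.val : FICon → Con F) :=
  fiGC.toGaloisInsertion fun d => le_fiCl d.val

noncomputable instance : CompleteLattice FICon := fiGI.liftCompleteLattice

/-- The lattice of monoid varieties: the order dual of the lattice of fully
invariant congruences on the free monoid `F`. -/
abbrev MON : Type := FIConᵒᵈ

/-- The monoid variety given by the identity system `S`. -/
def gen (S : Set (F × F)) : MON :=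
  OrderDual.toDual ⟨fiGen S, isFullyInvariant_fiGen S⟩

/-- The fully invariant congruence (equational theory) of a monoid variety. -/
def theta (V : MON) : Con F := (OrderDual.ofDual V).val

/-- Fixed pairwise distinct letters. -/
def x : F := FreeMonoid.of 0
def y : F := FreeMonoid.of 1
def z : F := FreeMonoid.of 2
def r : F := FreeMonoid.of 3

/-- The content of a word: the set of letters occurring in it. -/
def con (w : F) : Set ℕ := {a | a ∈ FreeMonoid.toList w}

/-- The set of letters that are simple in a word (occur exactly once). -/
def simpleIn (w : F) : Set ℕ := {a | (FreeMonoid.toList w).count a = 1}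

/-- Neutral element of a lattice. -/
def IsNeutralElt {L : Type*} [Lattice L] (a : L) : Prop :=
  ∀ y z : L, (a ⊔ y) ⊓ (y ⊔ z) ⊓ (z ⊔ a) = (a ⊓ y) ⊔ (y ⊓ z) ⊔ (z ⊓ a)

/-- Costandard element of a lattice. -/
def IsCostandardElt {L : Type*} [Lattice L] (a : L) : Prop :=
  ∀ y z : L, (a ⊓ y) ⊔ z = (a ⊔ z) ⊓ (y ⊔ z)

/-- Codistributive element of a lattice. -/
def IsCodistributiveElt {L : Type*} [Lattice L] (a : L) : Prop :=
  ∀ y z : L, a ⊓ (y ⊔ z) = (a ⊓ y) ⊔ (a ⊓ z)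

/-- Modular element of a lattice. -/
def IsModularElt {L : Type*} [Lattice L] (a : L) : Prop :=
  ∀ y z : L, y ≤ z → (a ⊔ y) ⊓ z = (a ⊓ z) ⊔ y

/-- Upper-modular element of a lattice. -/
def IsUpperModularElt {L : Type*} [Lattice L] (a : L) : Prop :=
  ∀ y z : L, y ≤ a → a ⊓ (y ⊔ z) = y ⊔ (a ⊓ z)

/-- Lower-modular element of a lattice. -/
def IsLowerModularElt {L : Type*} [Lattice L] (a : L) : Prop :=
  ∀ y z : L, a ≤ y → a ⊔ (y ⊓ z) = y ⊓ (a ⊔ z)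

/-- The variety `SL` of semilattice monoids. -/
def SLv : MON := gen {(x*x, x), (x*y, y*x)}

/-- The variety `C₂`. -/
def C2v : MON := gen {(x*x, x*x*x), (x*y, y*x)}

/-- The variety `Cₙ`. -/
def Cv (n : ℕ) : MON := gen {(x^n, x^(n+1)), (x*y, y*x)}

/-- The variety `Aₙ` of Abelian groups of exponent dividing `n`. -/
def Av (n : ℕ) : MON := gen {(x^n, 1), (x*y, y*x)}

/-- The variety `D`. -/
def Dv : MON := gen {(x*x, x*x*x), (x*x*y, x*y*x), (x*y*x, y*x*x)}

/-- The variety `B₂,₃`. -/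
def Bv : MON := gen {(x*x, x*x*x)}

/-- The word `s = yxyzxz`. -/
def s : F := y*x*y*z*x*z

/-- The word `t = yxzxyxz`. -/
def t : F := y*x*z*x*y*x*z

/-- The variety `Q`. -/
def Qv : MON := gen {(s, t)}

/-- The variety `F` (denoted `Fv` to avoid a clash with the free monoid). -/
def Fv : MON :=
  gen {(x*y*x, x*y*x*x), (x*x*y*y, y*y*x*x), (x*x*y, x*x*y*x), (x*y*r*x*y, y*x*r*x*y)}

/-! ### Fully invariant congruences and identities -/

/-- The monoid `M` satisfies the identity `u ≈ v`. -/
def Sat (M : Type*) [Monoid M] (u v : F) : Prop :=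
  ∀ g : ℕ → M, FreeMonoid.lift g u = FreeMonoid.lift g v

lemma rel_iff_sat {c : Con F} (hc : IsFullyInvariant c) (u v : F) :
    c u v ↔ Sat c.Quotient u v := by
  constructor
  · intro h g
    choose f hf using fun n => Con.mk'_surjective (c := c) (g n)
    have key : FreeMonoid.lift g = (Con.mk' c).comp (FreeMonoid.lift f) := by
      ext n
      simpa using (hf n).symm
    rw [key]
    exact (Con.eq c).2 (hc _ _ _ h)
  · intro h
    have key : FreeMonoid.lift (fun n => Con.mk' c (FreeMonoid.of n)) = Con.mk' c := by
      ext n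
      simp
    have h2 := h (fun n => Con.mk' c (FreeMonoid.of n))
    rw [key] at h2
    exact (Con.eq c).1 h2

/-- The equational theory of a monoid, as a congruence on the free monoid. -/
def modelCon (M : Type*) [Monoid M] : Con F where
  r := Sat M
  iseqv := ⟨fun _ _ => rfl, fun h g => (h g).symm, fun h k g => (h g).trans (k g)⟩
  mul' := by
    intro a b d e h k g
    rw [map_mul, map_mul, h g, k g]

lemma isFullyInvariant_modelCon (M : Type*) [Monoid M] : IsFullyInvariant (modelCon M) := by
  intro f u v h g
  have key : ∀ w, FreeMonoid.lift g (f w)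
      = FreeMonoid.lift (fun n => FreeMonoid.lift g (f (FreeMonoid.of n))) w := by
    intro w
    have : (FreeMonoid.lift g).comp f
        = FreeMonoid.lift (fun n => FreeMonoid.lift g (f (FreeMonoid.of n))) := by
      ext n
      simp
    rw [← this]
    rfl
  rw [key, key]
  exact h _

lemma sat_of_fiGen {M : Type*} [Monoid M] {S : Set (F × F)} (hS : ∀ p ∈ S, Sat M p.1 p.2)
    {u v : F} (h : fiGen S u v) : Sat M u v :=
  (fiGen_apply S u v).1 h (modelCon M) ⟨isFullyInvariant_modelCon M, hS⟩

lemma fiGen_mem {S : Set (F × F)} {p : F × F} (hp : p ∈ S) : fiGen S p.1 p.2 :=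
  (fiGen_apply S _ _).2 fun _ hc => hc.2 p hp

lemma fiGen_le {S : Set (F × F)} {c : Con F} (hc : IsFullyInvariant c)
    (hS : ∀ p ∈ S, c p.1 p.2) : fiGen S ≤ c :=
  sInf_le ⟨hc, hS⟩

/-! ### The defining identities as laws in a monoid -/

/-- The identities `x² ≈ x³`, `x²y ≈ xyx`, `xyx ≈ yx²` of the variety `D`. -/
structure DLaws (M : Type*) [Monoid M] : Prop where
  cube : ∀ a : M, a * a = a * a * a
  left : ∀ a b : M, a * a * b = a * b * a
  right : ∀ a b : M, a * b * a = b * a * a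

section
variable {M : Type*} [Monoid M]

lemma sat_cube : Sat M (x * x) (x * x * x) ↔ ∀ a : M, a * a = a * a * a := by
  constructor
  · intro h a
    simpa [x] using h fun _ => a
  · intro h g
    simpa [x] using h (g 0)

lemma sat_idem : Sat M (x * x) x ↔ ∀ a : M, a * a = a := by
  constructor
  · intro h a
    simpa [x] using h fun _ => a
  · intro h g
    simpa [x] using h (g 0)

lemma sat_comm : Sat M (x * y) (y * x) ↔ ∀ a b : M, a * b = b * a := by
  constructor
  · intro h a b
    simpa [x, y] using h fun n => if n = 0 then a else b
  · intro h g
    simpa [x, y] using h (g 0) (g 1)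

lemma sat_left : Sat M (x * x * y) (x * y * x) ↔ ∀ a b : M, a * a * b = a * b * a := by
  constructor
  · intro h a b
    simpa [x, y] using h fun n => if n = 0 then a else b
  · intro h g
    simpa [x, y] using h (g 0) (g 1)

lemma sat_right : Sat M (x * y * x) (y * x * x) ↔ ∀ a b : M, a * b * a = b * a * a := by
  constructor
  · intro h a b
    simpa [x, y] using h fun n => if n = 0 then a else b
  · intro h g
    simpa [x, y] using h (g 0) (g 1)

lemma DLaws.of_comm (hcube : ∀ a : M, a * a = a * a * a) (hcomm : ∀ a b : M, a * b = b * a) :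
    DLaws M :=
  ⟨hcube, fun a b => by rw [mul_assoc, mul_assoc, hcomm a b],
    fun a b => by rw [hcomm a b]⟩

/-! ### Evaluating words modulo the laws -/

/-- A square `a²` is central and absorbs every occurrence of `a` in the word behind it. -/
lemma square_mul_prod (h : DLaws M) (g : ℕ → M) (a : ℕ) (w : List ℕ) :
    g a * g a * (w.map g).prod = g a * g a * ((w.filter (· ≠ a)).map g).prod := by
  have central : ∀ b, g a * g a * b = b * (g a * g a) := fun b => by
    rw [h.left, h.right, mul_assoc]
  induction w with
  | nil => simp
  | cons b w ih =>
    by_cases hb : b = a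
    · subst hb
      simp only [List.map_cons, List.prod_cons, ne_eq, decide_not, decide_true, Bool.not_true,
        Bool.false_eq_true, not_false_eq_true, List.filter_cons_of_neg]
      rw [← mul_assoc, ← h.cube]
      simpa using ih
    · have : (b :: w).filter (· ≠ a) = b :: w.filter (· ≠ a) := by simp [hb]
      rw [this]
      simp only [List.map_cons, List.prod_cons]
      rw [← mul_assoc, central, mul_assoc, ih, ← mul_assoc, ← central, mul_assoc]

/-- One further occurrence of a letter turns a leading `a` into `a²`. -/
lemma lead_square (h : DLaws M) (g : ℕ → M) (a : ℕ) (w : List ℕ) (hw : a ∈ w) :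
    g a * (w.map g).prod = g a * g a * (w.map g).prod := by
  obtain ⟨p, q, rfl⟩ := List.append_of_mem hw
  simp only [List.map_append, List.map_cons, List.prod_append, List.prod_cons]
  generalize (p.map g).prod = P
  generalize (q.map g).prod = Q
  generalize g a = A
  have e1 : A * (P * (A * Q)) = A * P * A * Q := by simp only [mul_assoc]
  have e2 : A * A * (P * (A * Q)) = A * (A * P * A) * Q := by simp only [mul_assoc]
  rw [e1, e2, ← h.left, ← mul_assoc A (A * A) P, ← mul_assoc A A A, ← h.cube]

/-- A letter occurring at least twice can be extracted as a leading square. -/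
lemma prod_extract (h : DLaws M) (g : ℕ → M) (a : ℕ) (w : List ℕ) (hw : 2 ≤ w.count a) :
    (w.map g).prod = g a * g a * ((w.filter (· ≠ a)).map g).prod := by
  rw [← square_mul_prod h]
  induction w with
  | nil => simp at hw
  | cons b w ih =>
    by_cases hb : b = a
    · subst hb
      have hm : b ∈ w := by
        rw [← List.count_pos_iff]
        rw [List.count_cons_self] at hw
        omega
      simp only [List.map_cons, List.prod_cons]
      rw [← mul_assoc (g b * g b), ← h.cube]
      exact lead_square h g b w hm
    · have hw' : 2 ≤ w.count a := by
        rwa [List.count_cons_of_ne hb] at hw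
      have e := ih hw'
      simp only [List.map_cons, List.prod_cons]
      have central : g a * g a * g b = g b * (g a * g a) := by
        rw [h.left, h.right, mul_assoc]
      rw [← mul_assoc (g a * g a), central, mul_assoc, ← e]

lemma count_filter_ne (a b : ℕ) (w : List ℕ) :
    (w.filter (· ≠ a)).count b = if b = a then 0 else w.count b := by
  split_ifs with h
  · subst h
    simp [List.count_eq_zero]
  · exact List.count_filter (by simpa using h)

/-- Reduction to repetition-free words: if the multiplicities in `u` and `v` agree up to
truncation at `2`, the multiple letters can be removed from both words simultaneously, so it is
enough to treat repetition-free words. The relation `Q` carries whatever further information on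
`u` and `v` survives the removal of a multiple letter. -/
lemma prod_eq_of_cut (h : DLaws M) (g : ℕ → M) (Q : List ℕ → List ℕ → Prop)
    (hQ : ∀ u v a, 2 ≤ u.count a → 2 ≤ v.count a → Q u v →
      Q (u.filter (· ≠ a)) (v.filter (· ≠ a)))
    (base : ∀ u v : List ℕ, u.Nodup → v.Nodup → u.Perm v → Q u v →
      (u.map g).prod = (v.map g).prod)
    (u v : List ℕ) (hcut : ∀ a, min (u.count a) 2 = min (v.count a) 2) (huv : Q u v) :
    (u.map g).prod = (v.map g).prod := by
  induction hn : u.length using Nat.strong_induction_on generalizing u v with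
  | _ n ih =>
    by_cases hu : ∃ a, 2 ≤ u.count a
    · obtain ⟨a, ha⟩ := hu
      have hv : 2 ≤ v.count a := by
        have := hcut a
        omega
      rw [prod_extract h g a u ha, prod_extract h g a v hv]
      congr 1
      refine ih _ ?_ _ _ ?_ (hQ u v a ha hv huv) rfl
      · rw [← hn]
        refine List.length_filter_lt_length_iff_exists.2 ⟨a, ?_, by simp⟩
        exact List.count_pos_iff.1 (by omega)
      · intro b
        rw [count_filter_ne, count_filter_ne]
        split_ifs
        · rfl
        · exact hcut b
    · push Not at hu
      have hc : ∀ a, u.count a = v.count a := fun a => by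
        have := hcut a
        have := hu a
        omega
      refine base u v ?_ ?_ (List.perm_iff_count.2 hc) huv
      · exact List.nodup_iff_count_le_one.2 fun a => by have := hu a; omega
      · exact List.nodup_iff_count_le_one.2 fun a => by have := hu a; have := hc a; omega

/-- The subword formed by the simple letters of a word. -/
def simples (w : List ℕ) : List ℕ := w.filter (fun a => w.count a = 1)

lemma simples_filter_ne (w : List ℕ) (a : ℕ) (ha : 2 ≤ w.count a) :
    simples (w.filter (· ≠ a)) = simples w := by
  unfold simples
  rw [List.filter_filter]
  refine List.filter_congr fun b _ => ?_
  rw [count_filter_ne]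
  by_cases hb : b = a
  · subst hb
    simp
    omega
  · simp [hb]

lemma simples_of_nodup (w : List ℕ) (hw : w.Nodup) : simples w = w :=
  List.filter_eq_self.2 fun a ha => by simpa using List.count_eq_one_of_mem hw ha

lemma prod_eq_D (h : DLaws M) (g : ℕ → M) (u v : List ℕ)
    (hcut : ∀ a, min (u.count a) 2 = min (v.count a) 2) (hs : simples u = simples v) :
    (u.map g).prod = (v.map g).prod := by
  refine prod_eq_of_cut h g (fun u v => simples u = simples v) ?_ ?_ u v hcut hs
  · intro u v a hu hv e
    rw [simples_filter_ne u a hu, simples_filter_ne v a hv, e]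
  · intro u v hu hv _ e
    rw [simples_of_nodup u hu, simples_of_nodup v hv] at e
    rw [e]

lemma prod_perm (hcomm : ∀ a b : M, a * b = b * a) (g : ℕ → M) {u v : List ℕ}
    (h : u.Perm v) : (u.map g).prod = (v.map g).prod := by
  induction h with
  | nil => rfl
  | cons a _ ih => simp [ih]
  | swap a b l => simp [← mul_assoc, hcomm (g a) (g b)]
  | trans _ _ h1 h2 => exact h1.trans h2

lemma prod_eq_C2 (hcube : ∀ a : M, a * a = a * a * a) (hcomm : ∀ a b : M, a * b = b * a)
    (g : ℕ → M) (u v : List ℕ) (hcut : ∀ a, min (u.count a) 2 = min (v.count a) 2) :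
    (u.map g).prod = (v.map g).prod :=
  prod_eq_of_cut (.of_comm hcube hcomm) g (fun _ _ => True) (fun _ _ _ _ _ _ => trivial)
    (fun _ _ _ _ hp _ => prod_perm hcomm g hp) u v hcut trivial

lemma prod_absorb (hidem : ∀ a : M, a * a = a) (hcomm : ∀ a b : M, a * b = b * a)
    (g : ℕ → M) (u v : List ℕ) (h : ∀ a ∈ v, a ∈ u) :
    (u.map g).prod * (v.map g).prod = (u.map g).prod := by
  induction v with
  | nil => simp
  | cons a v ih =>
    obtain ⟨p, q, hpq⟩ := List.append_of_mem (h a (by simp))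
    have e : (u.map g).prod = g a * ((p ++ q).map g).prod := by
      rw [hpq, prod_perm hcomm g List.perm_middle]
      simp
    have e2 : (u.map g).prod * g a = (u.map g).prod := by
      rw [e, hcomm, ← mul_assoc, hidem]
    rw [List.map_cons, List.prod_cons, ← mul_assoc, e2]
    exact ih fun b hb => h b (by simp [hb])

lemma prod_eq_SL (hidem : ∀ a : M, a * a = a) (hcomm : ∀ a b : M, a * b = b * a)
    (g : ℕ → M) (u v : List ℕ) (h : ∀ a, a ∈ u ↔ a ∈ v) :
    (u.map g).prod = (v.map g).prod := by
  rw [← prod_absorb hidem hcomm g u v fun a => (h a).2, hcomm,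
    prod_absorb hidem hcomm g v u fun a => (h a).1]

/-! ### Consequences of an identity obtained by deleting letters -/

lemma prod_delete (g : ℕ → M) (p : ℕ → Bool) (hg : ∀ a, p a = false → g a = 1) (w : List ℕ) :
    (w.map g).prod = ((w.filter p).map g).prod := by
  induction w with
  | nil => rfl
  | cons a w ih =>
    cases ha : p a
    · simp [ha, hg a ha, ih]
    · simp [ha, ih]

lemma sat_pow {u v : F} (h : Sat M u v) (a : ℕ) (m : M) :
    m ^ (u.toList.count a) = m ^ (v.toList.count a) := by
  have key : ∀ w : List ℕ,
      (w.map fun n => if n = a then m else 1).prod = m ^ w.count a := by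
    intro w
    rw [prod_delete _ (· == a) (by intro b hb; simp_all) w, List.filter_beq]
    simp
  have := h fun n => if n = a then m else 1
  rwa [FreeMonoid.lift_apply, FreeMonoid.lift_apply, key, key] at this

lemma pow_eq_sq (hcube : ∀ a : M, a * a = a * a * a) (m : M) (n : ℕ) (hn : 2 ≤ n) :
    m ^ n = m * m := by
  induction n, hn using Nat.le_induction with
  | base => exact pow_two m
  | succ n _ ih => rw [pow_succ, ih, ← hcube]

lemma eq_one_of_content (hcube : ∀ a : M, a * a = a * a * a) {u v : F} (h : Sat M u v) {a : ℕ}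
    (hu : a ∈ u.toList) (hv : a ∉ v.toList) (m : M) : m = 1 := by
  have e := sat_pow h a m
  have hpos := List.count_pos_iff.2 hu
  rw [List.count_eq_zero.2 hv, pow_zero] at e
  rcases Nat.lt_or_ge (u.toList.count a) 2 with h2 | h2
  · have : u.toList.count a = 1 := by omega
    rwa [this, pow_one] at e
  · rw [pow_eq_sq hcube m _ h2] at e
    have := hcube m
    rw [e, one_mul] at this
    exact this.symm

lemma idem_of_cut (hcube : ∀ a : M, a * a = a * a * a) {u v : F} (h : Sat M u v) {a : ℕ}
    (hu : u.toList.count a = 1) (hv : 2 ≤ v.toList.count a) (m : M) : m * m = m := by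
  have e := sat_pow h a m
  rw [hu, pow_one, pow_eq_sq hcube m _ hv] at e
  exact e.symm

lemma DLaws.comm_of_idem (h : DLaws M) (hidem : ∀ a : M, a * a = a) (a b : M) :
    a * b = b * a := by
  have := (h.left a b).trans (h.right a b)
  rwa [mul_assoc b, hidem] at this

/-- Two different arrangements of the same distinct letters reverse the order of some two letters. -/
lemma exists_swapped_pair (u v : List ℕ) (hu : u.Nodup) (hv : v.Nodup) (hp : u.Perm v) (hne : u ≠ v) :
    ∃ a b, a ≠ b ∧ u.filter (fun n => n = a ∨ n = b) = [a, b] ∧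
      v.filter (fun n => n = a ∨ n = b) = [b, a] := by
  induction u generalizing v with
  | nil => exact absurd hp.nil_eq hne
  | cons a u ih =>
    cases v with
    | nil => exact absurd hp.eq_nil hne
    | cons b v =>
      obtain ⟨hau, hu'⟩ := List.nodup_cons.1 hu
      obtain ⟨hbv, hv'⟩ := List.nodup_cons.1 hv
      by_cases hab : a = b
      · subst hab
        obtain ⟨p, q, hpq, e1, e2⟩ := ih v hu' hv' hp.cons_inv (by simpa using hne)
        have hpu : p ∈ u := (List.mem_filter.1 (by rw [e1]; simp)).1
        have hqu : q ∈ u := (List.mem_filter.1 (by rw [e1]; simp)).1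
        have h1 : a ≠ p := fun e => hau (e ▸ hpu)
        have h2 : a ≠ q := fun e => hau (e ▸ hqu)
        exact ⟨p, q, hpq, by simpa [h1, h2] using e1, by simpa [h1, h2] using e2⟩
      ·
        -- The two first letters are in opposite orders in the two words.
        have hbu : b ∈ u := by
          have : b ∈ a :: u := hp.mem_iff.2 (by simp)
          simpa [Ne.symm hab] using this
        have hav : a ∈ v := by
          have : a ∈ b :: v := hp.mem_iff.1 (by simp)
          simpa [hab] using this
        have single : ∀ (w : List ℕ) (p q : ℕ), w.Nodup → p ∉ w → q ∈ w →
            w.filter (fun n => n = p ∨ n = q) = [q] := by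
          intro w p q hw hpw hqw
          have : w.filter (fun n => n = p ∨ n = q) = w.filter (· == q) := by
            refine List.filter_congr fun n hn => ?_
            have : n ≠ p := fun e => hpw (e ▸ hn)
            simp [this, Bool.beq_eq_decide_eq]
          rw [this, List.filter_beq, List.count_eq_one_of_mem hw hqw]
          rfl
        refine ⟨a, b, hab, ?_, ?_⟩
        · rw [List.filter_cons_of_pos (by simp), single u a b hu' hau hbu]
        · rw [List.filter_cons_of_pos (by simp)]
          have : v.filter (fun n => n = a ∨ n = b) = v.filter (fun n => n = b ∨ n = a) :=
            List.filter_congr fun n _ => by simp [or_comm]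
          rw [this, single v b a hv' hbv hav]

lemma comm_of_simples {u v : F} (h : Sat M u v)
    (hcut : ∀ a, min (u.toList.count a) 2 = min (v.toList.count a) 2)
    (hne : simples u.toList ≠ simples v.toList) (m n : M) : m * n = n * m := by
  have hcount : ∀ (w : List ℕ) a, (simples w).count a = if w.count a = 1 then 1 else 0 := by
    intro w a
    unfold simples
    split_ifs with h1
    · rw [List.count_filter (by simpa using h1), h1]
    · rw [List.count_eq_zero, List.mem_filter]
      simp [h1]
  have hnd : ∀ w : List ℕ, (simples w).Nodup := fun w =>
    List.nodup_iff_count_le_one.2 fun a => by rw [hcount]; split_ifs <;> omega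
  have hperm : (simples u.toList).Perm (simples v.toList) := by
    refine List.perm_iff_count.2 fun a => ?_
    rw [hcount, hcount]
    have := hcut a
    have : u.toList.count a = 1 ↔ v.toList.count a = 1 := by omega
    simp [this]
  obtain ⟨a, b, hab, e1, e2⟩ := exists_swapped_pair _ _ (hnd _) (hnd _) hperm hne
  have ha : a ∈ simples u.toList := (List.mem_filter.1 (by rw [e1]; simp)).1
  have hb : b ∈ simples u.toList := (List.mem_filter.1 (by rw [e1]; simp)).1
  have restrict : ∀ w : List ℕ, a ∈ simples w → b ∈ simples w →
      (simples w).filter (fun n => n = a ∨ n = b) = w.filter (fun n => n = a ∨ n = b) := by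
    intro w haw hbw
    have haw := (List.mem_filter.1 haw).2
    have hbw := (List.mem_filter.1 hbw).2
    conv_lhs => unfold simples
    rw [List.filter_filter]
    refine List.filter_congr fun n _ => ?_
    by_cases hna : n = a
    · subst hna; simpa using haw
    · by_cases hnb : n = b
      · subst hnb; simpa using hbw
      · simp [hna, hnb]
  rw [restrict _ ha hb] at e1
  rw [restrict _ (hperm.mem_iff.1 ha) (hperm.mem_iff.1 hb)] at e2
  have := h fun k => if k = a then m else if k = b then n else 1
  rw [FreeMonoid.lift_apply, FreeMonoid.lift_apply,
    prod_delete _ (fun k => k = a ∨ k = b) (by intro k hk; simp_all) u.toList,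
    prod_delete _ (fun k => k = a ∨ k = b) (by intro k hk; simp_all) v.toList, e1, e2] at this
  simpa [hab, Ne.symm hab] using this

end

/-! ### The varieties of the chain -/

lemma theta_le_iff (V W : MON) : V ≤ W ↔ theta W ≤ theta V := Iff.rfl

lemma theta_inv (V : MON) : IsFullyInvariant (theta V) := (OrderDual.ofDual V).2

lemma theta_sat (V : MON) (u v : F) : theta V u v ↔ Sat (theta V).Quotient u v :=
  rel_iff_sat (theta_inv V) u v

lemma le_gen_iff (V : MON) (S : Set (F × F)) :
    V ≤ gen S ↔ ∀ p ∈ S, Sat (theta V).Quotient p.1 p.2 := by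
  constructor
  · intro h p hp
    exact (theta_sat V _ _).1 (Con.le_def.1 ((theta_le_iff _ _).1 h) (fiGen_mem hp))
  · intro h
    exact (theta_le_iff _ _).2 (fiGen_le (theta_inv V) fun p hp => (theta_sat V _ _).2 (h p hp))

lemma le_SL_iff (V : MON) : V ≤ SLv ↔
    (∀ a : (theta V).Quotient, a * a = a) ∧ ∀ a b : (theta V).Quotient, a * b = b * a := by
  simp [SLv, le_gen_iff, sat_idem, sat_comm]

lemma le_C2_iff (V : MON) : V ≤ C2v ↔
    (∀ a : (theta V).Quotient, a * a = a * a * a) ∧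
      ∀ a b : (theta V).Quotient, a * b = b * a := by
  simp [C2v, le_gen_iff, sat_cube, sat_comm]

lemma le_D_iff (V : MON) : V ≤ Dv ↔ DLaws (theta V).Quotient := by
  have : V ≤ Dv ↔ (∀ a : (theta V).Quotient, a * a = a * a * a) ∧
      (∀ a b : (theta V).Quotient, a * a * b = a * b * a) ∧
      ∀ a b : (theta V).Quotient, a * b * a = b * a * a := by
    simp [Dv, le_gen_iff, sat_cube, sat_left, sat_right]
  rw [this]
  exact ⟨fun h => ⟨h.1, h.2.1, h.2.2⟩, fun h => ⟨h.1, h.2, h.3⟩⟩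

lemma SL_le (V : MON) (h : ∀ u v, theta V u v → ∀ a, a ∈ u.toList ↔ a ∈ v.toList) : SLv ≤ V := by
  refine (theta_le_iff _ _).2 (Con.le_def.2 fun {u v} huv => ?_)
  rw [theta_sat]
  intro g
  obtain ⟨h1, h2⟩ := (le_SL_iff SLv).1 le_rfl
  simpa [FreeMonoid.lift_apply] using prod_eq_SL h1 h2 g _ _ (h u v huv)

lemma C2_le (V : MON) (h : ∀ u v, theta V u v →
    ∀ a, min (u.toList.count a) 2 = min (v.toList.count a) 2) : C2v ≤ V := by
  refine (theta_le_iff _ _).2 (Con.le_def.2 fun {u v} huv => ?_)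
  rw [theta_sat]
  intro g
  obtain ⟨h1, h2⟩ := (le_C2_iff C2v).1 le_rfl
  simpa [FreeMonoid.lift_apply] using prod_eq_C2 h1 h2 g _ _ (h u v huv)

lemma D_le (V : MON) (h : ∀ u v, theta V u v →
    ∀ a, min (u.toList.count a) 2 = min (v.toList.count a) 2)
    (hs : ∀ u v, theta V u v → simples u.toList = simples v.toList) : Dv ≤ V := by
  refine (theta_le_iff _ _).2 (Con.le_def.2 fun {u v} huv => ?_)
  rw [theta_sat]
  intro g
  simpa [FreeMonoid.lift_apply] using
    prod_eq_D ((le_D_iff Dv).1 le_rfl) g _ _ (h u v huv) (hs u v huv)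

lemma eq_bot_of_trivial (V : MON) (h : ∀ m : (theta V).Quotient, m = 1) : V = ⊥ := by
  refine le_bot_iff.1 ((theta_le_iff _ _).2 (Con.le_def.2 fun {u v} _ => ?_))
  rw [theta_sat]
  intro g
  rw [h (FreeMonoid.lift g u), h (FreeMonoid.lift g v)]

lemma classify (V : MON) (hV : V ≤ Dv) : V = ⊥ ∨ V = SLv ∨ V = C2v ∨ V = Dv := by
  have hD := (le_D_iff V).1 hV
  by_cases hcon : ∀ u v, theta V u v → ∀ a, a ∈ u.toList → a ∈ v.toList
  swap
  · push Not at hcon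
    obtain ⟨u, v, huv, a, hu, hv⟩ := hcon
    exact .inl (eq_bot_of_trivial V
      (eq_one_of_content hD.cube ((theta_sat V u v).1 huv) hu hv))
  have hcon' : ∀ u v, theta V u v → ∀ a, a ∈ u.toList ↔ a ∈ v.toList := fun u v h a =>
    ⟨hcon u v h a, hcon v u ((theta V).symm h) a⟩
  by_cases hcut : ∀ u v, theta V u v → ∀ a, u.toList.count a = 1 → v.toList.count a < 2
  swap
  · push Not at hcut
    obtain ⟨u, v, huv, a, hu, hv⟩ := hcut
    have hidem := idem_of_cut hD.cube ((theta_sat V u v).1 huv) hu hv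
    exact .inr (.inl (le_antisymm ((le_SL_iff V).2 ⟨hidem, hD.comm_of_idem hidem⟩)
      (SL_le V hcon')))
  have hcut' : ∀ u v, theta V u v →
      ∀ a, min (u.toList.count a) 2 = min (v.toList.count a) 2 := by
    intro u v h a
    have h1 := hcut u v h a
    have h2 := hcut v u ((theta V).symm h) a
    have h3 := hcon' u v h a
    rw [← List.count_pos_iff, ← List.count_pos_iff] at h3
    omega
  by_cases hs : ∀ u v, theta V u v → simples u.toList = simples v.toList
  · exact .inr (.inr (.inr (le_antisymm hV (D_le V hcut' hs))))
  · push Not at hs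
    obtain ⟨u, v, huv, hne⟩ := hs
    have hcomm := comm_of_simples ((theta_sat V u v).1 huv) (hcut' u v huv) hne
    exact .inr (.inr (.inl (le_antisymm ((le_C2_iff V).2 ⟨hD.cube, hcomm⟩) (C2_le V hcut'))))

/-! ### Separating the varieties -/

/-- The submonoid `{0, 1, 2}` of the multiplicative monoid of `ZMod 4`, cut out by `m² = m³`. -/
def threeSub : Submonoid (ZMod 4) where
  carrier := {m | m * m = m * m * m}
  one_mem' := by decide
  mul_mem' := by
    intro a b
    simp only [Set.mem_ofPred_eq]
    revert a b
    decide

/-- The factors of the word `ab`, together with a zero. -/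
inductive Five
  | one | a | b | ab | zero

namespace Five

/-- Concatenation; products that are not factors of `ab` are zero. -/
def mul : Five → Five → Five
  | one, m => m
  | m, one => m
  | a, b => ab
  | _, _ => zero

instance : Monoid Five where
  mul := mul
  one := one
  one_mul m := by cases m <;> rfl
  mul_one m := by cases m <;> rfl
  mul_assoc m n k := by cases m <;> cases n <;> cases k <;> rfl

end Five

lemma not_SL_le_bot : ¬ SLv ≤ ⊥ := by
  intro h
  have h1 : theta SLv x 1 := Con.le_def.1 ((theta_le_iff _ _).1 h) (by
    exact Con.le_def.1 (show theta (gen {(x, 1)}) ≤ theta ⊥ from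
      (theta_le_iff _ _).1 bot_le) (fiGen_mem (p := (x, 1)) rfl))
  have h2 : Sat (ZMod 2) x 1 := sat_of_fiGen (by
    simp only [Set.mem_insert_iff, Set.mem_singleton_iff, forall_eq_or_imp, forall_eq, sat_idem,
      sat_comm]
    decide) h1
  have h3 := h2 fun _ => 0
  simp [x] at h3

lemma not_C2_le_SL : ¬ C2v ≤ SLv := by
  intro h
  have h1 : theta C2v (x * x) x := Con.le_def.1 ((theta_le_iff _ _).1 h)
    (fiGen_mem (p := (x * x, x)) (by simp))
  have h2 : Sat threeSub (x * x) x := sat_of_fiGen (by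
    simp only [Set.mem_insert_iff, Set.mem_singleton_iff, forall_eq_or_imp, forall_eq, sat_cube,
      sat_comm]
    exact ⟨fun m => Subtype.ext m.2, mul_comm⟩) h1
  have h3 := congrArg Subtype.val (sat_idem.1 h2 ⟨2, show (2 : ZMod 4) * 2 = 2 * 2 * 2 by decide⟩)
  exact absurd h3 (show (2 : ZMod 4) * 2 ≠ 2 by decide)

lemma not_D_le_C2 : ¬ Dv ≤ C2v := by
  intro h
  have h1 : theta Dv (x * y) (y * x) := Con.le_def.1 ((theta_le_iff _ _).1 h)
    (fiGen_mem (p := (x * y, y * x)) (by simp))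
  have h2 : Sat Five (x * y) (y * x) := sat_of_fiGen (by
    simp only [Set.mem_insert_iff, Set.mem_singleton_iff, forall_eq_or_imp, forall_eq, sat_cube,
      sat_left, sat_right]
    refine ⟨?_, ?_, ?_⟩
    · intro m; cases m <;> rfl
    · intro m n; cases m <;> cases n <;> rfl
    · intro m n; cases m <;> cases n <;> rfl) h1
  have h3 : Five.ab = Five.zero := sat_comm.1 h2 Five.a Five.b
  cases h3

theorem statement12 :
    {V : MON | V ≤ Dv} = {⊥, SLv, C2v, Dv} ∧
      (⊥ : MON) < SLv ∧ SLv < C2v ∧ C2v < Dv := by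
  have h1 : SLv ≤ C2v := by
    obtain ⟨hi, hc⟩ := (le_SL_iff SLv).1 le_rfl
    exact (le_C2_iff _).2 ⟨fun a => by rw [hi, hi], hc⟩
  have h2 : C2v ≤ Dv := by
    obtain ⟨hi, hc⟩ := (le_C2_iff C2v).1 le_rfl
    exact (le_D_iff _).2 (.of_comm hi hc)
  refine ⟨?_, lt_of_le_not_ge bot_le not_SL_le_bot, lt_of_le_not_ge h1 not_C2_le_SL,
    lt_of_le_not_ge h2 not_D_le_C2⟩
  ext V
  simp only [Set.mem_ofPred_eq, Set.mem_insert_iff, Set.mem_singleton_iff]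
  constructor
  · exact classify V
  · rintro (rfl | rfl | rfl | rfl)
    exacts [bot_le, h1.trans h2, h2, le_rfl]
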